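/- arXiv:2502.02332 — 2 statements merged into one kernel-verified Lean document; each statement's English description precedes it below -/
import Mathlib

section
/- Let E be a real inner product space, let J : E → ℝ be differentiable with L-Lipschitz gradient (L > 0), and suppose J(x) ≤ J* for all x ∈ E, for some J* ∈ ℝ. Let 0 < η ≤ 1/(4L), let N be a positive natural number, and let the iterates satisfy θ_{n+1} = θ_n + η·g_n where ‖g_n − ∇J(θ_n)‖ ≤ ε + B for all 0 ≤ n ≤ N−1, with ε, B ≥ 0. Then (1/N)·Σ_{n=0}^{N−1} ‖∇J(θ_n)‖² ≤ 4(J* − J(θ_0))/(η·N) + 6ε² + 6B². -/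
/-!
The Lipschitz bound on the gradient gives the quadratic lower bound
`J (x + v) ≥ J x + ⟪∇J x, v⟫ - L / 2 * ‖v‖ ^ 2` (`ascent_lower_bound`). Along `v = η • g` with
`L * η ≤ 1 / 4`, expanding `‖g - ∇J x‖ ^ 2` to eliminate `⟪∇J x, g⟫` turns it into
`‖∇J x‖ ^ 2 ≤ 4 / η * (J (x + η • g) - J x) + 3 * ‖g - ∇J x‖ ^ 2` (`ascent_step`).
Summing over the iterates telescopes the increments of `J`, and
`3 * (ε + B) ^ 2 ≤ 6 * ε ^ 2 + 6 * B ^ 2`.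
-/

/-- Quadratic lower bound for a function with Lipschitz gradient: the gap between the two sides
along the segment from `x` to `x + v` has nonnegative derivative. -/
theorem ascent_lower_bound
    {E : Type*} [NormedAddCommGroup E] [InnerProductSpace ℝ E] [CompleteSpace E]
    (J : E → ℝ) (gJ : E → E) (hgrad : ∀ x, HasGradientAt J (gJ x) x)
    (L : ℝ) (hLip : ∀ x y, ‖gJ x - gJ y‖ ≤ L * ‖x - y‖) (x v : E) :
    J x + inner ℝ (gJ x) v - L / 2 * ‖v‖ ^ 2 ≤ J (x + v) := by
  have hd : ∀ t : ℝ, HasDerivAt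
      (fun t : ℝ => J (x + t • v) - t * inner ℝ (gJ x) v + L / 2 * ‖v‖ ^ 2 * t ^ 2)
      (inner ℝ (gJ (x + t • v)) v - inner ℝ (gJ x) v + L * ‖v‖ ^ 2 * t) t := by
    intro t
    have h1 : HasDerivAt (fun t : ℝ => x + t • v) v t := by
      simpa using ((hasDerivAt_id t).smul_const v).const_add x
    have h2 : HasDerivAt (fun t : ℝ => J (x + t • v)) (inner ℝ (gJ (x + t • v)) v) t := by
      simpa [Function.comp_def] using
        (hgrad (x + t • v)).hasFDerivAt.comp_hasDerivAt t h1
    have h3 : HasDerivAt (fun t : ℝ => t * inner ℝ (gJ x) v) (inner ℝ (gJ x) v) t := by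
      simpa using (hasDerivAt_id t).mul_const (inner ℝ (gJ x) v)
    have h4 : HasDerivAt (fun t : ℝ => L / 2 * ‖v‖ ^ 2 * t ^ 2) (L * ‖v‖ ^ 2 * t) t := by
      exact ((hasDerivAt_pow 2 t).const_mul (L / 2 * ‖v‖ ^ 2)).congr_deriv (by
        push_cast
        ring)
    exact (h2.sub h3).add h4
  have hmono := monotoneOn_of_hasDerivWithinAt_nonneg (convex_Icc (0 : ℝ) 1)
    (fun t _ => (hd t).continuousAt.continuousWithinAt)
    (fun t _ => (hd t).hasDerivWithinAt) (by
      intro t ht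
      rw [interior_Icc] at ht
      have h1 : |inner ℝ (gJ (x + t • v) - gJ x) v| ≤ L * (t * ‖v‖) * ‖v‖ := by
        refine (abs_real_inner_le_norm _ _).trans ?_
        gcongr
        simpa [norm_smul, abs_of_pos ht.1] using hLip (x + t • v) x
      rw [inner_sub_left] at h1
      nlinarith [(abs_le.1 h1).1])
  have h := hmono (Set.left_mem_Icc.2 zero_le_one) (Set.right_mem_Icc.2 zero_le_one) zero_le_one
  simp only [zero_smul, one_smul, add_zero] at h
  linarith

/-- One inexact ascent step either increases `J` in proportion to the squared gradient norm or is
paid for by the gradient error. -/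
theorem ascent_step
    {E : Type*} [NormedAddCommGroup E] [InnerProductSpace ℝ E] [CompleteSpace E]
    (J : E → ℝ) (gJ : E → E) (hgrad : ∀ x, HasGradientAt J (gJ x) x)
    (L : ℝ) (hLip : ∀ x y, ‖gJ x - gJ y‖ ≤ L * ‖x - y‖)
    (η : ℝ) (hη0 : 0 < η) (hη : L * η ≤ 1 / 4) (x g : E) :
    ‖gJ x‖ ^ 2 ≤ 4 / η * (J (x + η • g) - J x) + 3 * ‖g - gJ x‖ ^ 2 := by
  have h := ascent_lower_bound J gJ hgrad L hLip x (η • g)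
  rw [real_inner_smul_right, norm_smul, Real.norm_of_nonneg hη0.le] at h
  have hd : ‖g - gJ x‖ ^ 2 = ‖g‖ ^ 2 - 2 * inner ℝ (gJ x) g + ‖gJ x‖ ^ 2 := by
    rw [norm_sub_sq_real, real_inner_comm]
  have h1 : L * η * ‖g‖ ^ 2 ≤ 1 / 4 * ‖g‖ ^ 2 := by gcongr
  have h2 : inner ℝ (gJ x) g - 1 / 8 * ‖g‖ ^ 2 ≤ (J (x + η • g) - J x) / η := by
    rw [le_div_iff₀ hη0]
    nlinarith [mul_le_mul_of_nonneg_right h1 hη0.le]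
  have h3 : 4 / η * (J (x + η • g) - J x) = 4 * ((J (x + η • g) - J x) / η) := by ring
  -- After `h2`, the slack is exactly `‖g - gJ x‖ ^ 2 + ‖gJ x‖ ^ 2 + 3 / 2 * ‖g‖ ^ 2`.
  nlinarith [sq_nonneg ‖g‖, sq_nonneg ‖g - gJ x‖, sq_nonneg ‖gJ x‖]


/-- Abstract form of the stationary-solution theorem: if each inexact gradient `g n`
deviates from the true gradient by at most `ε + B` (zeroth-order error plus
task-selection bias), then the ergodic average of squared gradient norms is bounded
by `4Δ₀/(ηN) + 6ε² + 6B²`. -/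
theorem inexact_gradient_ascent_stationary
    {E : Type*} [NormedAddCommGroup E] [InnerProductSpace ℝ E] [CompleteSpace E]
    (J : E → ℝ) (gJ : E → E) (hgrad : ∀ x, HasGradientAt J (gJ x) x)
    (L : ℝ) (hL : 0 < L) (hLip : ∀ x y, ‖gJ x - gJ y‖ ≤ L * ‖x - y‖)
    (Jstar : ℝ) (hbdd : ∀ x, J x ≤ Jstar)
    (η : ℝ) (hη0 : 0 < η) (hη : η ≤ 1 / (4 * L))
    (N : ℕ) (hN : 0 < N) (g : ℕ → E) (θ : ℕ → E)
    (hiter : ∀ n, θ (n + 1) = θ n + η • g n)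
    (ε B : ℝ) (hε : 0 ≤ ε) (hB : 0 ≤ B)
    (herr : ∀ n ≤ N - 1, ‖g n - gJ (θ n)‖ ≤ ε + B) :
    (1 / (N : ℝ)) * ∑ n ∈ Finset.range N, ‖gJ (θ n)‖ ^ 2 ≤
      4 * (Jstar - J (θ 0)) / (η * N) + 6 * ε ^ 2 + 6 * B ^ 2 := by
  have hη' : L * η ≤ 1 / 4 := by
    rw [le_div_iff₀ (by positivity)] at hη
    linarith
  have hN' : (0 : ℝ) < N := by exact_mod_cast hN
  have hstep : ∀ n ∈ Finset.range N, ‖gJ (θ n)‖ ^ 2 ≤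
      4 / η * (J (θ (n + 1)) - J (θ n)) + (6 * ε ^ 2 + 6 * B ^ 2) := by
    intro n hn
    have hs := ascent_step J gJ hgrad L hLip η hη0 hη' (θ n) (g n)
    rw [← hiter] at hs
    have he : ‖g n - gJ (θ n)‖ ^ 2 ≤ (ε + B) ^ 2 := by
      gcongr
      exact herr n (Nat.le_sub_one_of_lt (Finset.mem_range.1 hn))
    nlinarith [sq_nonneg (ε - B)]
  have hsum := Finset.sum_le_sum hstep
  rw [Finset.sum_add_distrib, ← Finset.mul_sum, Finset.sum_range_sub (fun n => J (θ n)),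
    Finset.sum_const, Finset.card_range, nsmul_eq_mul] at hsum
  have hJ : 4 / η * (J (θ N) - J (θ 0)) ≤ 4 / η * (Jstar - J (θ 0)) := by
    gcongr
    exact hbdd _
  calc (1 / (N : ℝ)) * ∑ n ∈ Finset.range N, ‖gJ (θ n)‖ ^ 2
      ≤ (1 / (N : ℝ)) * (4 / η * (Jstar - J (θ 0)) + N * (6 * ε ^ 2 + 6 * B ^ 2)) := by
        gcongr
        linarith
    _ = 4 * (Jstar - J (θ 0)) / (η * N) + 6 * ε ^ 2 + 6 * B ^ 2 := by
        field_simp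
        ring
end

section
/- Let E be a real inner product space, let f : E → ℝ be differentiable with ψ-Lipschitz gradient (ψ > 0), and let f* ∈ ℝ and λ > 0 satisfy f(x) ≥ f* and ‖∇f(x)‖² ≥ λ·(f(x) − f*) for all x ∈ E. Let 0 < η ≤ 1/(4ψ) with λη ≤ 4, let ε ≥ 0, let N be a natural number, and let iterates satisfy K_{n+1} = K_n − η·g_n with ‖g_n − ∇f(K_n)‖ ≤ ε for all 0 ≤ n ≤ N−1. Then f(K_N) − f* ≤ (1 − λη/4)^N·(f(K_0) − f*) + 3ε²/λ. -/
/-!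
The descent lemma for a `ψ`-Lipschitz gradient bounds `f (x - η • g)` by
`f x - η ⟪∇f x, g⟫ + ψ η² ‖g‖² / 2`. Writing `g = ∇f x + e`, using `ψ η ≤ 1/4` and Young's
inequality, one step costs at most `-(η/4) ‖∇f x‖² + (3η/4) ‖e‖²`. Gradient domination turns
this into the affine recursion `D' ≤ (1 - λη/4) D + (3η/4) ε²` for the optimality gap, whose
fixed point is exactly `3ε²/λ`; iterating it contracts geometrically to that level, the
contraction factor being nonnegative because `λη ≤ 4`.
-/

/-- Descent lemma: a function with `ψ`-Lipschitz gradient lies below its quadratic upper model. -/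
lemma descent_lemma {E : Type*} [NormedAddCommGroup E] [InnerProductSpace ℝ E] [CompleteSpace E]
    (f : E → ℝ) (gf : E → E) (hgrad : ∀ x, HasGradientAt f (gf x) x)
    (ψ : ℝ) (hLip : ∀ x y, ‖gf x - gf y‖ ≤ ψ * ‖x - y‖) (x v : E) :
    f (x + v) ≤ f x + inner ℝ (gf x) v + ψ / 2 * ‖v‖ ^ 2 := by
  have hd : ∀ t : ℝ, HasDerivAt (fun t : ℝ => f (x + t • v)) (inner ℝ (gf (x + t • v)) v) t := by
    intro t
    have h1 : HasDerivAt (fun t : ℝ => x + t • v) v t := by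
      simpa using ((hasDerivAt_id t).smul_const v).const_add x
    have h2 := (hgrad (x + t • v)).hasFDerivAt.comp_hasDerivAt t h1
    rw [InnerProductSpace.toDual_apply_apply] at h2
    exact h2
  have hB : ∀ t : ℝ, HasDerivAt
      (fun t : ℝ => f x + t * inner ℝ (gf x) v + ψ / 2 * ‖v‖ ^ 2 * t ^ 2)
      (inner ℝ (gf x) v + ψ * ‖v‖ ^ 2 * t) t := by
    intro t
    have h := (((hasDerivAt_id t).mul_const (inner ℝ (gf x) v)).const_add (f x)).add
      ((hasDerivAt_pow 2 t).const_mul (ψ / 2 * ‖v‖ ^ 2))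
    refine h.congr_deriv ?_
    norm_num
    ring
  have key := image_le_of_deriv_right_le_deriv_boundary (a := 0) (b := 1)
    (fun t _ => (hd t).continuousAt.continuousWithinAt)
    (fun t _ => (hd t).hasDerivWithinAt) (by simp)
    (fun t _ => (hB t).continuousAt.continuousWithinAt)
    (fun t _ => (hB t).hasDerivWithinAt)
    (fun t ht => by
      have h1 : inner ℝ (gf (x + t • v) - gf x) v ≤ ‖gf (x + t • v) - gf x‖ * ‖v‖ :=
        real_inner_le_norm _ _
      have h2 := hLip (x + t • v) x
      rw [add_sub_cancel_left, norm_smul, Real.norm_of_nonneg ht.1] at h2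
      have h3 := mul_le_mul_of_nonneg_right h2 (norm_nonneg v)
      rw [inner_sub_left] at h1
      linarith)
    (Set.right_mem_Icc.2 zero_le_one)
  simpa using key

/-- One inexact gradient step decreases `f` up to a bias proportional to the squared error. -/
lemma inexact_step {E : Type*} [NormedAddCommGroup E] [InnerProductSpace ℝ E] [CompleteSpace E]
    (f : E → ℝ) (gf : E → E) (hgrad : ∀ x, HasGradientAt f (gf x) x)
    (ψ : ℝ) (hψ : 0 < ψ) (hLip : ∀ x y, ‖gf x - gf y‖ ≤ ψ * ‖x - y‖)
    (η : ℝ) (hη0 : 0 < η) (hη : η ≤ 1 / (4 * ψ)) (x g : E) :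
    f (x - η • g) ≤ f x - η / 4 * ‖gf x‖ ^ 2 + 3 * η / 4 * ‖g - gf x‖ ^ 2 := by
  have h := descent_lemma f gf hgrad ψ hLip x (-(η • g))
  rw [← sub_eq_add_neg, norm_neg, inner_neg_right, inner_smul_right, norm_smul,
    Real.norm_of_nonneg hη0.le] at h
  obtain ⟨e, rfl⟩ : ∃ e, g = gf x + e := ⟨g - gf x, by abel⟩
  rw [add_sub_cancel_left]
  rw [inner_add_right, real_inner_self_eq_norm_sq, mul_pow, norm_add_sq_real] at h
  have hψη : ψ * η ≤ 1 / 4 := by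
    rw [le_div_iff₀ (by positivity)] at hη
    linarith
  have hp : 0 ≤ ‖gf x‖ ^ 2 + 2 * inner ℝ (gf x) e + ‖e‖ ^ 2 := by
    rw [← norm_add_sq_real]
    positivity
  have hm : 0 ≤ ‖gf x‖ ^ 2 - 2 * inner ℝ (gf x) e + ‖e‖ ^ 2 := by
    rw [← norm_sub_sq_real]
    positivity
  have h1 := mul_le_mul_of_nonneg_right hψη (mul_nonneg hη0.le hp)
  have h2 := mul_nonneg hη0.le hp
  have h3 := mul_nonneg hη0.le hm
  linarith

/-- Linear convergence to a bias ball for inexact gradient descent on a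
gradient-dominated (PL) objective: with uniform gradient-estimation error `ε`,
`f(K_N) - f* ≤ (1 - λη/4)^N (f(K₀) - f*) + 3ε²/λ`. -/
theorem pl_inexact_descent_linear_convergence
    {E : Type*} [NormedAddCommGroup E] [InnerProductSpace ℝ E] [CompleteSpace E]
    (f : E → ℝ) (gf : E → E) (hgrad : ∀ x, HasGradientAt f (gf x) x)
    (ψ : ℝ) (hψ : 0 < ψ) (hLip : ∀ x y, ‖gf x - gf y‖ ≤ ψ * ‖x - y‖)
    (fstar : ℝ) (lam : ℝ) (hlam : 0 < lam)
    (hlb : ∀ x, fstar ≤ f x) (hPL : ∀ x, lam * (f x - fstar) ≤ ‖gf x‖ ^ 2)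
    (η : ℝ) (hη0 : 0 < η) (hη : η ≤ 1 / (4 * ψ)) (hlam_eta : lam * η ≤ 4)
    (ε : ℝ) (hε : 0 ≤ ε) (N : ℕ) (K : ℕ → E) (g : ℕ → E)
    (hiter : ∀ n, K (n + 1) = K n - η • g n)
    (herr : ∀ n ≤ N - 1, ‖g n - gf (K n)‖ ≤ ε) :
    f (K N) - fstar ≤
      (1 - lam * η / 4) ^ N * (f (K 0) - fstar) + 3 * ε ^ 2 / lam := by

  have hc : 0 ≤ 1 - lam * η / 4 := by linarith
  have hstep : ∀ n ≤ N - 1, f (K (n + 1)) - fstar ≤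
      (1 - lam * η / 4) * (f (K n) - fstar) + 3 * η / 4 * ε ^ 2 := by
    intro n hn
    have h1 := inexact_step f gf hgrad ψ hψ hLip η hη0 hη (K n) (g n)
    rw [← hiter] at h1
    have h2 : ‖g n - gf (K n)‖ ^ 2 ≤ ε ^ 2 := pow_le_pow_left₀ (norm_nonneg _) (herr n hn) 2
    have h3 := mul_le_mul_of_nonneg_left h2 (by positivity : 0 ≤ 3 * η / 4)
    have h4 := mul_le_mul_of_nonneg_left (hPL (K n)) (by positivity : 0 ≤ η / 4)
    linarith
  have main : ∀ n ≤ N, f (K n) - fstar ≤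
      (1 - lam * η / 4) ^ n * (f (K 0) - fstar) + 3 * ε ^ 2 / lam := by
    intro n
    induction n with
    | zero =>
      intro _
      have : 0 ≤ 3 * ε ^ 2 / lam := by positivity
      simpa using this
    | succ n ih =>
      intro hn
      have h1 := hstep n (by omega)
      have h2 := mul_le_mul_of_nonneg_left (ih (by omega)) hc
      -- `3ε²/λ` is the fixed point of the affine recursion
      have h3 : (1 - lam * η / 4) * (3 * ε ^ 2 / lam) + 3 * η / 4 * ε ^ 2
          = 3 * ε ^ 2 / lam := by
        field_simp
        ring
      rw [pow_succ']
      linarith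
  exact main N le_rfl
end
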